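/- Let d ≥ 1 and α = 2, and let D = (D_{i,j}) be the d×d matrix with entries D_{i,j} = lim_{N→∞} (1/log N) Σ_{0<‖z‖≤N} z_i z_j p(z) (assumed to exist in ℝ). Then for every a ∈ ℝ^d and β ∈ ℝ, lim_{N→∞} (N²/log N) · Σ_{z∈ℤ^d, z≠0} p(z) (e^{iβ(z·a)/N} − 1 − iβ(z·a)/N) = −(β²/2) Σ_{i,j=1}^d D_{i,j} a_i a_j, where the limit is in ℂ. -/

import Mathlib

/-- Euclidean norm of a point of `ℤ^d`. -/
noncomputable def znorm (d : ℕ) (z : Fin d → ℤ) : ℝ :=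
  Real.sqrt (∑ i, ((z i : ℝ)) ^ 2)

/-- The jump kernel `p(z) = ‖z‖^{-(d+α)} (2·1_{z₁>0} + 1_{z₁=0})`, `p(0) = 0`. -/
noncomputable def pker (d : ℕ) [NeZero d] (α : ℝ) (z : Fin d → ℤ) : ℝ :=
  if z = 0 then 0
  else znorm d z ^ (-((d : ℝ) + α)) *
    ((if 0 < z 0 then (2 : ℝ) else 0) + (if z 0 = 0 then 1 else 0))

open Filter Topology

/-- The sup norm of an integer vector, as a natural number. -/
def supNatAbs {d : ℕ} (z : Fin d → ℤ) : ℕ := Finset.univ.sup fun i => (z i).natAbs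

lemma natAbs_le_supNatAbs {d : ℕ} (z : Fin d → ℤ) (i : Fin d) :
    (z i).natAbs ≤ supNatAbs z :=
  Finset.le_sup (f := fun i => (z i).natAbs) (Finset.mem_univ i)

lemma supNatAbs_pos {d : ℕ} {z : Fin d → ℤ} (hz : z ≠ 0) : 0 < supNatAbs z := by
  obtain ⟨i, hi⟩ := Function.ne_iff.mp hz
  exact (Int.natAbs_pos.mpr hi).trans_le (natAbs_le_supNatAbs z i)

lemma abs_le_znorm {d : ℕ} (z : Fin d → ℤ) (i : Fin d) : |(z i : ℝ)| ≤ znorm d z :=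
  Real.abs_le_sqrt
    (Finset.single_le_sum (f := fun i => (z i : ℝ) ^ 2) (fun _ _ => sq_nonneg _)
      (Finset.mem_univ i))

lemma znorm_nonneg {d : ℕ} (z : Fin d → ℤ) : 0 ≤ znorm d z := Real.sqrt_nonneg _

lemma supNatAbs_le_znorm {d : ℕ} [NeZero d] (z : Fin d → ℤ) :
    (supNatAbs z : ℝ) ≤ znorm d z := by
  obtain ⟨i, -, hi⟩ := Finset.exists_mem_eq_sup Finset.univ
    (Finset.univ_nonempty (α := Fin d)) fun i => (z i).natAbs
  rw [supNatAbs, hi, Nat.cast_natAbs, Int.cast_abs]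
  exact abs_le_znorm z i

lemma finite_znorm_le (d : ℕ) (R : ℝ) : {z : Fin d → ℤ | znorm d z ≤ R}.Finite := by
  refine (Set.Finite.pi' fun _ : Fin d => Set.finite_Icc (-⌈R⌉) ⌈R⌉).subset fun z hz i => ?_
  have h : |(z i : ℝ)| ≤ (⌈R⌉ : ℝ) := (abs_le_znorm z i).trans (hz.trans (Int.le_ceil R))
  exact abs_le.mp (by exact_mod_cast h)

/-- A cube shell of radius `n` in dimension `d` has `O(n ^ (d - 1))` lattice points. -/
lemma card_filter_supNatAbs_eq_le {d : ℕ} [NeZero d] (s : Finset (Fin d → ℤ)) {n : ℕ}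
    (hn : 0 < n) :
    (s.filter fun z => supNatAbs z = n).card ≤ d * (2 * (3 * n) ^ (d - 1)) := by
  classical
  let face : Fin d → Finset (Fin d → ℤ) := fun i =>
    Fintype.piFinset fun j => if j = i then {(n : ℤ), -(n : ℤ)} else Finset.Icc (-(n : ℤ)) n
  have hsub : (s.filter fun z => supNatAbs z = n) ⊆ Finset.univ.biUnion face := by
    intro z hz
    have hz' := (Finset.mem_filter.mp hz).2
    obtain ⟨i, -, hi⟩ := Finset.exists_mem_eq_sup Finset.univ
      (Finset.univ_nonempty (α := Fin d)) fun i => (z i).natAbs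
    refine Finset.mem_biUnion.mpr ⟨i, Finset.mem_univ i, Fintype.mem_piFinset.mpr fun j => ?_⟩
    have hj := natAbs_le_supNatAbs z j
    change supNatAbs z = _ at hi
    split_ifs with h
    · subst h
      simp only [Finset.mem_insert, Finset.mem_singleton]
      omega
    · simp only [Finset.mem_Icc]
      omega
  refine (Finset.card_le_card hsub).trans ?_
  refine (Finset.card_biUnion_le_card_mul _ _ (2 * (3 * n) ^ (d - 1)) fun i _ => ?_).trans
    (by simp)
  rw [Fintype.card_piFinset, ← Finset.mul_prod_erase _ _ (Finset.mem_univ i)]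
  refine Nat.mul_le_mul (by simpa using Finset.card_le_two) ?_
  refine (Finset.prod_le_pow_card _ _ (3 * n) fun j hj => ?_).trans (by simp)
  rw [if_neg (Finset.ne_of_mem_erase hj), Int.card_Icc]
  omega

lemma sum_Icc_inv_add_sq_le {N : ℝ} (hN : 0 < N) (M : ℕ) :
    ∑ n ∈ Finset.Icc 1 M, ((N + n) ^ 2)⁻¹ ≤ N⁻¹ := by
  suffices h : ∑ n ∈ Finset.Icc 1 M, ((N + n) ^ 2)⁻¹ ≤ N⁻¹ - (N + M)⁻¹ from
    h.trans (sub_le_self _ (by positivity))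
  induction M with
  | zero => simp
  | succ M ih =>
    rw [Finset.sum_Icc_succ_top (by omega)]
    have h : ((N + (M + 1 : ℕ)) ^ 2)⁻¹ ≤ (N + M)⁻¹ - (N + (M + 1 : ℕ))⁻¹ := by
      push_cast
      have hM : 0 < N + M := by positivity
      rw [inv_sub_inv (by positivity) (by positivity), inv_eq_one_div,
        div_le_div_iff₀ (by positivity) (by positivity)]
      nlinarith
    linarith

lemma sum_inv_supNatAbs_le {d : ℕ} [NeZero d] {N : ℝ} (hN : 0 < N)
    (s : Finset (Fin d → ℤ)) (hs : 0 ∉ s) :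
    ∑ z ∈ s, ((supNatAbs z : ℝ) ^ (d - 1) * (N + supNatAbs z) ^ 2)⁻¹ ≤
      d * (2 * 3 ^ (d - 1)) * N⁻¹ := by
  classical
  have hmaps : ∀ z ∈ s, supNatAbs z ∈ Finset.Icc 1 (s.sup supNatAbs) := fun z hz =>
    Finset.mem_Icc.mpr ⟨supNatAbs_pos fun h => hs (h ▸ hz), Finset.le_sup hz⟩
  rw [← Finset.sum_fiberwise_of_maps_to hmaps]
  calc _ ≤ ∑ n ∈ Finset.Icc 1 (s.sup supNatAbs),
        (d * (2 * 3 ^ (d - 1)) : ℝ) * ((N + n) ^ 2)⁻¹ := by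
        refine Finset.sum_le_sum fun n hn => ?_
        have hn0 : 0 < n := (Finset.mem_Icc.mp hn).1
        rw [Finset.sum_congr rfl fun z hz => by rw [(Finset.mem_filter.mp hz).2],
          Finset.sum_const, nsmul_eq_mul]
        have hcard : ((s.filter fun z => supNatAbs z = n).card : ℝ) ≤
            d * (2 * (3 * n) ^ (d - 1)) := by
          exact_mod_cast card_filter_supNatAbs_eq_le s hn0
        refine (mul_le_mul_of_nonneg_right hcard (by positivity)).trans_eq ?_
        have hnR : (n : ℝ) ≠ 0 := by positivity
        have hNn : N + n ≠ 0 := by positivity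
        rw [mul_pow]
        field_simp
    _ ≤ _ := by
        rw [← Finset.mul_sum]
        exact mul_le_mul_of_nonneg_left (sum_Icc_inv_add_sq_le hN _) (by positivity)

/-- The Taylor remainder of `exp (I * x)`, of third order for small `s` and of first order for
large `s`, where `|x| ≤ A * s`. -/
lemma norm_exp_remainder_le {x A s : ℝ} (hA : 0 ≤ A) (hs : 0 ≤ s) (hx : |x| ≤ A * s) :
    ‖Complex.exp (Complex.I * x) - 1 - Complex.I * x +
        ((if s ≤ 1 then x ^ 2 / 2 else 0 : ℝ) : ℂ)‖ ≤
      (4 * A ^ 3 * Real.exp A + 8 * A) * (s ^ 3 / (1 + s) ^ 2) := by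
  have hnorm : ‖Complex.I * (x : ℂ)‖ = |x| := by simp
  split_ifs with h
  · have h1 := Complex.norm_exp_sub_sum_le_norm_mul_exp (Complex.I * x) 3
    have h2 : Complex.exp (Complex.I * x) - 1 - Complex.I * x + ((x ^ 2 / 2 : ℝ) : ℂ) =
        Complex.exp (Complex.I * x) -
          ∑ m ∈ Finset.range 3, (Complex.I * x) ^ m / (m.factorial : ℂ) := by
      simp [Finset.sum_range_succ, mul_pow]
      ring
    rw [h2]
    rw [hnorm] at h1
    have hxA : |x| ≤ A := hx.trans (mul_le_of_le_one_right hA h)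
    have hfrac : s ^ 3 ≤ 4 * (s ^ 3 / (1 + s) ^ 2) := by
      rw [← mul_div_assoc, le_div_iff₀ (by positivity), mul_comm 4]
      exact mul_le_mul_of_nonneg_left (by nlinarith) (by positivity)
    calc _ ≤ _ := h1
      _ ≤ (A * s) ^ 3 * Real.exp A := by gcongr
      _ = A ^ 3 * Real.exp A * s ^ 3 := by ring
      _ ≤ A ^ 3 * Real.exp A * (4 * (s ^ 3 / (1 + s) ^ 2)) := by gcongr
      _ ≤ _ := by
        have : 0 ≤ 8 * A * (s ^ 3 / (1 + s) ^ 2) := by positivity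
        linarith
  · have h1 : ‖Complex.exp (Complex.I * x) - 1‖ ≤ |x| := by
      simpa using Real.norm_exp_I_mul_ofReal_sub_one_le (x := x)
    have hfrac : s ≤ 4 * (s ^ 3 / (1 + s) ^ 2) := by
      rw [← mul_div_assoc, le_div_iff₀ (by positivity)]
      have : s * (1 + s) ^ 2 ≤ s * (2 * s) ^ 2 := by gcongr; linarith
      linarith
    calc _ = ‖(Complex.exp (Complex.I * x) - 1) - Complex.I * x‖ := by simp
      _ ≤ |x| + |x| := (norm_sub_le _ _).trans (add_le_add h1 hnorm.le)
      _ ≤ 2 * A * s := by linarith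
      _ ≤ 2 * A * (4 * (s ^ 3 / (1 + s) ^ 2)) := by gcongr
      _ ≤ _ := by
        have : 0 ≤ 4 * A ^ 3 * Real.exp A * (s ^ 3 / (1 + s) ^ 2) := by positivity
        linarith

lemma pker_zero {d : ℕ} [NeZero d] (α : ℝ) : pker d α 0 = 0 := if_pos rfl

lemma pker_nonneg {d : ℕ} [NeZero d] (α : ℝ) (z : Fin d → ℤ) : 0 ≤ pker d α z := by
  unfold pker
  split_ifs <;> first | positivity | skip
  all_goals exact mul_nonneg (Real.rpow_nonneg (znorm_nonneg z) _) (by norm_num)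

lemma pker_two_le {d : ℕ} [NeZero d] {z : Fin d → ℤ} (hz : z ≠ 0) :
    pker d 2 z ≤ 2 * (znorm d z ^ (d + 2))⁻¹ := by
  rw [pker, if_neg hz, Real.rpow_neg (znorm_nonneg z), mul_comm 2]
  have h : znorm d z ^ ((d : ℝ) + 2) = znorm d z ^ (d + 2) := by
    rw [← Real.rpow_natCast]; push_cast; rfl
  rw [h]
  have := znorm_nonneg z
  refine mul_le_mul_of_nonneg_left ?_ (by positivity)
  split_ifs <;> first | omega | norm_num

lemma abs_sum_mul_le {d : ℕ} (z : Fin d → ℤ) (a : Fin d → ℝ) :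
    |∑ i, (z i : ℝ) * a i| ≤ (∑ i, |a i|) * znorm d z := by
  refine (Finset.abs_sum_le_sum_abs _ _).trans ?_
  rw [Finset.sum_mul]
  refine Finset.sum_le_sum fun i _ => ?_
  rw [abs_mul, mul_comm]
  exact mul_le_mul_of_nonneg_left (abs_le_znorm z i) (abs_nonneg _)

/-- The kernel times the Taylor remainder at scale `N`, the quadratic term being removed only on
the ball of radius `N`. -/
noncomputable def pkerRemainder (d : ℕ) [NeZero d] (x : (Fin d → ℤ) → ℝ) (N : ℝ)
    (z : Fin d → ℤ) : ℂ :=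
  (pker d 2 z : ℂ) * (Complex.exp (Complex.I * (x z / N : ℝ)) - 1 - Complex.I * (x z / N : ℝ) +
    ((if znorm d z / N ≤ 1 then (x z / N) ^ 2 / 2 else 0 : ℝ) : ℂ))

lemma norm_pkerRemainder_le {d : ℕ} [NeZero d] {x : (Fin d → ℤ) → ℝ} {A N : ℝ} (hA : 0 ≤ A)
    (hx : ∀ z, |x z| ≤ A * znorm d z) (hN : 0 < N) {z : Fin d → ℤ} (hz : z ≠ 0) :
    ‖pkerRemainder d x N z‖ ≤ 2 * (4 * A ^ 3 * Real.exp A + 8 * A) * N⁻¹ *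
      ((supNatAbs z : ℝ) ^ (d - 1) * (N + supNatAbs z) ^ 2)⁻¹ := by
  have hn : (0 : ℝ) < supNatAbs z := by exact_mod_cast supNatAbs_pos hz
  have hnr := supNatAbs_le_znorm z
  have hr : 0 < znorm d z := hn.trans_le hnr
  have hxs : |x z / N| ≤ A * (znorm d z / N) := by
    rw [abs_div, abs_of_pos hN, ← mul_div_assoc]
    exact div_le_div_of_nonneg_right (hx z) hN.le
  rw [pkerRemainder, norm_mul, Complex.norm_real, Real.norm_of_nonneg (pker_nonneg 2 z)]
  refine (mul_le_mul (pker_two_le hz) (norm_exp_remainder_le hA (by positivity) hxs)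
    (norm_nonneg _) (by positivity)).trans ?_
  calc _ = 2 * (4 * A ^ 3 * Real.exp A + 8 * A) * N⁻¹ *
        (znorm d z ^ (d - 1) * (N + znorm d z) ^ 2)⁻¹ := by
        have hNr : N + znorm d z ≠ 0 := by positivity
        have hadd : 1 + znorm d z / N = (N + znorm d z) / N := by field_simp
        have hd : d + 2 = d - 1 + 3 := by have := NeZero.pos d; omega
        rw [hadd, hd, pow_add]
        field_simp
    _ ≤ _ := by gcongr

lemma sum_norm_pkerRemainder_le {d : ℕ} [NeZero d] {x : (Fin d → ℤ) → ℝ} {A N : ℝ}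
    (hA : 0 ≤ A) (hx : ∀ z, |x z| ≤ A * znorm d z) (hN : 0 < N) (s : Finset (Fin d → ℤ)) :
    ∑ z ∈ s, ‖pkerRemainder d x N z‖ ≤
      2 * (4 * A ^ 3 * Real.exp A + 8 * A) * (d * (2 * 3 ^ (d - 1))) * (N ^ 2)⁻¹ := by
  classical
  have h0 : ‖pkerRemainder d x N 0‖ = 0 := by simp [pkerRemainder, pker_zero]
  rw [← Finset.sum_erase s h0]
  calc _ ≤ ∑ z ∈ s.erase 0, 2 * (4 * A ^ 3 * Real.exp A + 8 * A) * N⁻¹ *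
        ((supNatAbs z : ℝ) ^ (d - 1) * (N + supNatAbs z) ^ 2)⁻¹ :=
        Finset.sum_le_sum fun z hz => norm_pkerRemainder_le hA hx hN (Finset.ne_of_mem_erase hz)
    _ ≤ 2 * (4 * A ^ 3 * Real.exp A + 8 * A) * N⁻¹ * (d * (2 * 3 ^ (d - 1)) * N⁻¹) := by
        rw [← Finset.mul_sum]
        exact mul_le_mul_of_nonneg_left
          (sum_inv_supNatAbs_le hN _ (Finset.notMem_erase 0 s)) (by positivity)
    _ = _ := by ring

lemma summable_norm_pkerRemainder {d : ℕ} [NeZero d] {x : (Fin d → ℤ) → ℝ} {A N : ℝ}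
    (hA : 0 ≤ A) (hx : ∀ z, |x z| ≤ A * znorm d z) (hN : 0 < N) :
    Summable fun z => ‖pkerRemainder d x N z‖ :=
  summable_of_sum_le (fun _ => norm_nonneg _) (sum_norm_pkerRemainder_le hA hx hN)

/-- The remainder sum is `O(N ^ (-2))`, hence negligible against `log N / N ^ 2`. -/
lemma tendsto_tsum_pkerRemainder {d : ℕ} [NeZero d] {x : (Fin d → ℤ) → ℝ} {A : ℝ}
    (hA : 0 ≤ A) (hx : ∀ z, |x z| ≤ A * znorm d z) :
    Tendsto (fun N : ℕ => (((N : ℝ) ^ 2 / Real.log N : ℝ) : ℂ) * ∑' z, pkerRemainder d x N z)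
      atTop (𝓝 0) := by
  set C := 2 * (4 * A ^ 3 * Real.exp A + 8 * A) * (d * (2 * 3 ^ (d - 1)))
  have hlog : Tendsto (fun N : ℕ => C * (Real.log N)⁻¹) atTop (𝓝 0) := by
    have hinv := (Real.tendsto_log_atTop.comp
      (tendsto_natCast_atTop_atTop (R := ℝ))).inv_tendsto_atTop
    simpa using hinv.const_mul C
  refine squeeze_zero_norm' ?_ hlog
  filter_upwards [eventually_ge_atTop 2] with N hN2
  have hN : (0 : ℝ) < N := by positivity
  have hL : 0 < Real.log N := Real.log_pos (by exact_mod_cast hN2)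
  have hsum : ‖∑' z, pkerRemainder d x N z‖ ≤ C * ((N : ℝ) ^ 2)⁻¹ :=
    (norm_tsum_le_tsum_norm (summable_norm_pkerRemainder hA hx hN)).trans
      (Real.tsum_le_of_sum_le (fun _ => norm_nonneg _) (sum_norm_pkerRemainder_le hA hx hN))
  rw [norm_mul, Complex.norm_real, Real.norm_of_nonneg (by positivity)]
  refine (mul_le_mul_of_nonneg_left hsum (by positivity)).trans_eq ?_
  field_simp

lemma summable_ite_znorm_le {d : ℕ} (f : (Fin d → ℤ) → ℝ) (R : ℝ) :
    Summable fun z => if z ≠ 0 ∧ znorm d z ≤ R then f z else 0 := by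
  refine summable_of_hasFiniteSupport ((finite_znorm_le d R).subset fun z hz => ?_)
  by_contra h
  exact hz (if_neg fun h' => h h'.2)

lemma sq_mul_tsum_quadratic {d : ℕ} [NeZero d] (a : Fin d → ℝ) (β : ℝ) {N : ℝ} (hN : 0 < N) :
    N ^ 2 * ∑' z : Fin d → ℤ, (if z ≠ 0 ∧ znorm d z ≤ N then
        pker d 2 z * ((β * (∑ i, (z i : ℝ) * a i) / N) ^ 2 / 2) else 0) =
      β ^ 2 / 2 * ∑ i, ∑ j, (∑' z : Fin d → ℤ,
        (if z ≠ 0 ∧ znorm d z ≤ N then (z i : ℝ) * (z j : ℝ) * pker d 2 z else 0)) *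
          a i * a j := by
  simp_rw [← tsum_mul_right]
  have hs : ∀ i j, Summable fun z : Fin d → ℤ =>
      (if z ≠ 0 ∧ znorm d z ≤ N then (z i : ℝ) * (z j : ℝ) * pker d 2 z else 0) * a i * a j :=
    fun i j => ((summable_ite_znorm_le _ N).mul_right _).mul_right _
  simp_rw [fun i => (Summable.tsum_finsetSum fun j (_ : j ∈ Finset.univ) => hs i j).symm]
  rw [← Summable.tsum_finsetSum fun i _ => summable_sum fun j _ => hs i j, ← tsum_mul_left,
    ← tsum_mul_left]
  congr 1 with z
  split_ifs
  · have h : (∑ i, (z i : ℝ) * a i) ^ 2 * pker d 2 z =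
        ∑ i, ∑ j, (z i : ℝ) * (z j : ℝ) * pker d 2 z * a i * a j := by
      rw [sq, Finset.sum_mul_sum, Finset.sum_mul]
      refine Finset.sum_congr rfl fun i _ => ?_
      rw [Finset.sum_mul]
      exact Finset.sum_congr rfl fun j _ => by ring
    rw [← h]
    field_simp
  · simp

/-- for `α = 2`, with `D_{i,j} = lim_{N→∞} (1/log N) Σ_{0<‖z‖≤N} z_i z_j p(z)`
(assumed to exist), one has
`lim_{N→∞} (N²/log N) Σ_{z≠0} p(z)(e^{iβ(z·a)/N} − 1 − iβ(z·a)/N)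
  = −(β²/2) Σ_{i,j} D_{i,j} a_i a_j`. -/
theorem statement8 (d : ℕ) [NeZero d] (hd : 1 ≤ d) (D : Fin d → Fin d → ℝ)
    (hD : ∀ i j : Fin d,
      Filter.Tendsto
        (fun N : ℕ => (Real.log N)⁻¹ *
          ∑' z : Fin d → ℤ,
            (if z ≠ 0 ∧ znorm d z ≤ (N : ℝ) then (z i : ℝ) * (z j : ℝ) * pker d 2 z else 0))
        Filter.atTop (nhds (D i j)))
    (a : Fin d → ℝ) (β : ℝ) :
    Filter.Tendsto
      (fun N : ℕ => (((N : ℝ) ^ 2 / Real.log N : ℝ) : ℂ) *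
        ∑' z : Fin d → ℤ, (pker d 2 z : ℂ) *
          (Complex.exp (Complex.I * (β : ℂ) * ((∑ i, (z i : ℝ) * a i : ℝ) : ℂ) / (N : ℂ)) - 1
            - Complex.I * (β : ℂ) * ((∑ i, (z i : ℝ) * a i : ℝ) : ℂ) / (N : ℂ)))
      Filter.atTop
      (nhds ((-(β ^ 2 / 2) * ∑ i, ∑ j, D i j * a i * a j : ℝ) : ℂ)) := by
  set x : (Fin d → ℤ) → ℝ := fun z => β * ∑ i, (z i : ℝ) * a i with hxdef
  have hA : 0 ≤ |β| * ∑ i, |a i| := by positivity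
  have hx : ∀ z, |x z| ≤ (|β| * ∑ i, |a i|) * znorm d z := fun z => by
    rw [hxdef, abs_mul, mul_assoc]
    exact mul_le_mul_of_nonneg_left (abs_sum_mul_le z a) (abs_nonneg β)
  have hquad : Tendsto (fun N : ℕ => -(β ^ 2 / 2) * ∑ i, ∑ j, ((Real.log N)⁻¹ *
      ∑' z : Fin d → ℤ,
        (if z ≠ 0 ∧ znorm d z ≤ (N : ℝ) then (z i : ℝ) * (z j : ℝ) * pker d 2 z else 0)) *
          a i * a j) atTop (𝓝 (-(β ^ 2 / 2) * ∑ i, ∑ j, D i j * a i * a j)) :=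
    (tendsto_finsetSum _ fun i _ => tendsto_finsetSum _ fun j _ =>
      ((hD i j).mul_const _).mul_const _).const_mul _
  have hlim := (tendsto_tsum_pkerRemainder hA hx).add
    ((Complex.continuous_ofReal.tendsto _).comp hquad)
  rw [zero_add] at hlim
  refine hlim.congr' ?_
  filter_upwards [eventually_ge_atTop 1] with N hN1
  have hN : (0 : ℝ) < N := by exact_mod_cast hN1
  have hterm : ∀ z : Fin d → ℤ, (pker d 2 z : ℂ) *
      (Complex.exp (Complex.I * (β : ℂ) * ((∑ i, (z i : ℝ) * a i : ℝ) : ℂ) / (N : ℂ)) - 1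
        - Complex.I * (β : ℂ) * ((∑ i, (z i : ℝ) * a i : ℝ) : ℂ) / (N : ℂ)) =
      pkerRemainder d x N z - ((if z ≠ 0 ∧ znorm d z ≤ (N : ℝ) then
        pker d 2 z * ((x z / N) ^ 2 / 2) else 0 : ℝ) : ℂ) := fun z => by
    have harg : Complex.I * (β : ℂ) * ((∑ i, (z i : ℝ) * a i : ℝ) : ℂ) / (N : ℂ) =
        Complex.I * (x z / N : ℝ) := by
      simp only [hxdef, Complex.ofReal_div, Complex.ofReal_mul, Complex.ofReal_natCast]
      ring
    rw [harg, pkerRemainder]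
    rcases eq_or_ne z 0 with rfl | hz
    · simp [pker_zero]
    · simp only [div_le_one hN, ne_eq, hz, not_false_eq_true, true_and]
      split_ifs <;> push_cast <;> ring
  simp_rw [hterm]
  rw [(summable_norm_pkerRemainder hA hx hN).of_norm.tsum_sub
    (Complex.hasSum_ofReal.mpr (summable_ite_znorm_le _ _).hasSum).summable,
    ← Complex.ofReal_tsum, mul_sub, sub_eq_add_neg]
  congr 1
  rw [Function.comp_apply, ← Complex.ofReal_mul, ← Complex.ofReal_neg]
  congr 1
  rw [div_mul_eq_mul_div, sq_mul_tsum_quadratic a β hN]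
  simp_rw [mul_assoc, ← Finset.mul_sum]
  ring
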